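/- Let n ≥ 1 and let φ : ℝⁿ → ℝ be twice continuously differentiable. Let K ⊂ ℝⁿ be compact, let {x_k} ⊂ K, suppose the Hessian ∇²φ(x_k) is invertible for every k with ‖(∇²φ(x_k))⁻¹‖ ≤ c in operator norm for some c > 0, let {g_k} ⊂ ℝⁿ be bounded, and let {η_k} be positive reals with lim_{k→∞} η_k = 0. Define x_k⁺ = x_k − η_k (∇²φ(x_k))⁻¹ g_k. Then lim_{k→∞} ‖ g_k + (∇φ(x_k⁺) − ∇φ(x_k))/η_k ‖ = 0. -/

import Mathlib

open Filter Topology Metric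

/-- The Hessian of `φ` at `x`, viewed as a continuous linear map (the Fréchet derivative
of the gradient map). -/
noncomputable def hess {n : ℕ} (φ : EuclideanSpace ℝ (Fin n) → ℝ)
    (x : EuclideanSpace ℝ (Fin n)) :
    EuclideanSpace ℝ (Fin n) →L[ℝ] EuclideanSpace ℝ (Fin n) :=
  fderiv ℝ (gradient φ) x

/-!
A `C¹` map is strictly differentiable at every point with a continuous derivative, so its Taylor
remainder `f (x + v) - f x - f' x v` is `o(v)` at `(a, 0)` for every `a`. Compactness makes this
uniform for `x` near `K`. Taking `v = -η • d` with `d = (f' x)⁻¹ g` bounded and dividing by `η`, the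
linear term becomes exactly `-g`, and what is left is `o(η) / η`. The theorem is the case `f = ∇φ`.
-/

open Asymptotics

theorem contDiff_gradient {E : Type*} [NormedAddCommGroup E] [InnerProductSpace ℝ E]
    [CompleteSpace E] {φ : E → ℝ} {m n : WithTop ℕ∞}
    (hφ : ContDiff ℝ n φ) (hmn : m + 1 ≤ n) : ContDiff ℝ m (gradient φ) :=
  (InnerProductSpace.toDual ℝ E).symm.contDiff.comp (hφ.fderiv_right hmn)

theorem isInvertible_of_isUnit {R M : Type*} [Semiring R] [AddCommMonoid M] [TopologicalSpace M]
    [Module R M] {A : M →L[R] M} (hA : IsUnit A) : A.IsInvertible := by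
  obtain ⟨u, rfl⟩ := hA
  exact ⟨.ofUnit u, rfl⟩

section Taylor

variable {𝕜 E F : Type*} [NormedAddCommGroup E] [NormedAddCommGroup F]

theorem isLittleO_sub_sub_apply_of_hasStrictFDerivAt [NontriviallyNormedField 𝕜]
    [NormedSpace 𝕜 E] [NormedSpace 𝕜 F] {f : E → F} {f' : E → E →L[𝕜] F} {a : E}
    (hf : HasStrictFDerivAt f (f' a) a) (hf' : ContinuousAt f' a) :
    (fun p : E × E => f (p.1 + p.2) - f p.1 - f' p.1 p.2) =o[𝓝 (a, 0)] fun p => p.2 := by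
  have pair_tendsto : Tendsto (fun p : E × E => (p.1 + p.2, p.1)) (𝓝 (a, 0)) (𝓝 (a, a)) := by
    have : Continuous fun p : E × E => (p.1 + p.2, p.1) := by fun_prop
    simpa using this.tendsto (a, 0)
  have remainder_at_a :
      (fun p : E × E => f (p.1 + p.2) - f p.1 - f' a p.2) =o[𝓝 (a, 0)] fun p => p.2 := by
    simpa [Function.comp_def] using hf.isLittleO.comp_tendsto pair_tendsto
  have derivative_change : (fun p : E × E => (f' p.1 - f' a) p.2) =o[𝓝 (a, 0)] fun p => p.2 := by
    have derivative_tendsto : Tendsto (fun p : E × E => f' p.1 - f' a) (𝓝 (a, 0)) (𝓝 0) := by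
      simpa using (hf'.tendsto.comp continuousAt_fst.tendsto).sub_const (f' a)
    refine isLittleO_iff.2 fun ε hε => ?_
    filter_upwards [derivative_tendsto.norm.eventually_le_const (by simpa using hε)] with p hp
    exact ContinuousLinearMap.le_of_opNorm_le _ hp _
  refine (remainder_at_a.sub derivative_change).congr_left fun p => ?_
  simp

variable [RCLike 𝕜] [NormedSpace 𝕜 E] [NormedSpace 𝕜 F]
  {f : E → F} {K : Set E} {ι : Type*} {l : Filter ι} {x : ι → E}

theorem isLittleO_sub_sub_fderiv_nhdsSet_prod (hK : IsCompact K)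
    (hf : ∀ a ∈ K, ContDiffAt 𝕜 1 f a) :
    (fun p : E × E => f (p.1 + p.2) - f p.1 - fderiv 𝕜 f p.1 p.2) =o[𝓝ˢ K ×ˢ 𝓝 0]
      fun p => p.2 := by
  rw [← nhdsSet_singleton, ← hK.nhdsSet_prod_eq isCompact_singleton, isLittleO_iff]
  refine fun ε hε => eventually_nhdsSet_iff_forall.2 ?_
  rintro ⟨a, v⟩ ⟨ha, rfl : v = 0⟩
  exact (isLittleO_sub_sub_apply_of_hasStrictFDerivAt
    ((hf a ha).hasStrictFDerivAt one_ne_zero)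
    ((hf a ha).continuousAt_fderiv one_ne_zero)).def hε

theorem tendsto_inv_smul_sub_sub_fderiv (hK : IsCompact K)
    (hf : ∀ a ∈ K, ContDiffAt 𝕜 1 f a) (hx : Tendsto x l (𝓝ˢ K))
    {d : ι → E} (hd : IsBoundedUnder (· ≤ ·) l fun k => ‖d k‖)
    {t : ι → 𝕜} (ht : Tendsto t l (𝓝[≠] 0)) :
    Tendsto (fun k => (t k)⁻¹ • (f (x k + t k • d k) - f (x k)) - fderiv 𝕜 f (x k) (d k))
      l (𝓝 0) := by
  obtain ⟨t_tendsto, t_ne⟩ := tendsto_nhdsWithin_iff.1 ht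
  have step_isBigO : (fun k => t k • d k) =O[l] t := by
    simpa using (isBigO_refl t l).smul (hd.isBigO_one 𝕜)
  have step_tendsto : Tendsto (fun k => t k • d k) l (𝓝 0) := step_isBigO.trans_tendsto t_tendsto
  have remainder : (fun k => f (x k + t k • d k) - f (x k) - fderiv 𝕜 f (x k) (t k • d k))
      =o[l] t :=
    ((isLittleO_sub_sub_fderiv_nhdsSet_prod hK hf).comp_tendsto
      (hx.prodMk step_tendsto)).trans_isBigO step_isBigO
  refine remainder.tendsto_inv_smul_nhds_zero.congr' ?_
  filter_upwards [t_ne] with k hk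
  rw [smul_sub, map_smul, inv_smul_smul₀ hk]

theorem stmt12_general (hK : IsCompact K) (hf : ∀ a ∈ K, ContDiffAt 𝕜 1 f a)
    (hx : Tendsto x l (𝓝ˢ K)) (hinv : ∀ᶠ k in l, (fderiv 𝕜 f (x k)).IsInvertible)
    (hinvbd : IsBoundedUnder (· ≤ ·) l fun k => ‖(fderiv 𝕜 f (x k)).inverse‖)
    {g : ι → F} (hg : IsBoundedUnder (· ≤ ·) l fun k => ‖g k‖)
    {η : ι → 𝕜} (hη : Tendsto η l (𝓝[≠] 0)) :
    Tendsto (fun k => g k +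
        (η k)⁻¹ • (f (x k - η k • (fderiv 𝕜 f (x k)).inverse (g k)) - f (x k))) l (𝓝 0) := by
  have direction_bounded :
      IsBoundedUnder (· ≤ ·) l fun k => ‖-(fderiv 𝕜 f (x k)).inverse (g k)‖ := by
    obtain ⟨c, hc⟩ := hinvbd.eventually_le
    obtain ⟨M, hM⟩ := hg.eventually_le
    refine isBoundedUnder_of_eventually_le (a := c * M) ?_
    filter_upwards [hc, hM] with k hck hMk
    rw [norm_neg]
    exact ContinuousLinearMap.le_of_opNorm_le_of_le _ hck hMk
  refine (tendsto_inv_smul_sub_sub_fderiv hK hf hx direction_bounded hη).congr' ?_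
  filter_upwards [hinv] with k hk
  rw [map_neg, hk.self_apply_inverse, smul_neg, ← sub_eq_add_neg, sub_neg_eq_add, add_comm]

end Taylor

/-- Hessian-preconditioned steps inexactly solve the Bregman
subproblem: for `φ` of class `C²`, iterates `x_k` in a compact set with uniformly
bounded Hessian inverses, bounded `g_k` and stepsizes `η_k → 0`, the points
`x_k⁺ = x_k − η_k (∇²φ(x_k))⁻¹ g_k` satisfy
`‖g_k + (∇φ(x_k⁺) − ∇φ(x_k))/η_k‖ → 0`. -/
theorem stmt12 (n : ℕ) (hn : 1 ≤ n)
    (φ : EuclideanSpace ℝ (Fin n) → ℝ) (hφ : ContDiff ℝ 2 φ)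
    (K : Set (EuclideanSpace ℝ (Fin n))) (hK : IsCompact K)
    (x : ℕ → EuclideanSpace ℝ (Fin n)) (hxK : ∀ k, x k ∈ K)
    (hinv : ∀ k, IsUnit (hess φ (x k)))
    (c : ℝ) (hc : 0 < c) (hinvbd : ∀ k, ‖(hess φ (x k)).inverse‖ ≤ c)
    (g : ℕ → EuclideanSpace ℝ (Fin n)) (hgbd : Bornology.IsBounded (Set.range g))
    (η : ℕ → ℝ) (hηpos : ∀ k, 0 < η k) (hη0 : Tendsto η atTop (nhds 0)) :
    Tendsto (fun k =>
        ‖g k + (η k)⁻¹ •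
            (gradient φ (x k - η k • (hess φ (x k)).inverse (g k)) -
              gradient φ (x k))‖) atTop (nhds 0) := by
  exact tendsto_zero_iff_norm_tendsto_zero.1 <| stmt12_general hK
    (fun _ _ => (contDiff_gradient hφ one_add_one_eq_two.le).contDiffAt)
    ((tendsto_principal.2 (.of_forall hxK)).mono_right principal_le_nhdsSet)
    (.of_forall fun k => isInvertible_of_isUnit (hinv k))
    (isBoundedUnder_of ⟨c, hinvbd⟩)
    (isBoundedUnder_of (hgbd.exists_norm_le.imp fun _ hM k => hM _ ⟨k, rfl⟩))
    (tendsto_nhdsWithin_iff.2 ⟨hη0, .of_forall fun k => (hηpos k).ne'⟩)
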